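/- Let (X, ρ) be a complete metric space, let m ∈ ℕ with m ≥ 3, and let ψ : X → X satisfy ρ(ψ^m x, ψ^m y) ≤ α(ρ(x, ψy) + ρ(y, ψx)) for all x, y ∈ X, for some α ∈ [0, 1/2) (no continuity assumption). Then there exists a point x* ∈ X such that for every initial point x ∈ X the iterative sequence (ψⁿx) converges to x*, and every fixed point of ψ equals x* (i.e. Fix(ψ) ⊆ {x*}). -/

import Mathlib

/-- **Corollary 3.4.** If `ψ` is an `m`-Chatterjea contraction (`m ≥ 3`) on a complete
metric space (no continuity assumption), then all iterative sequences `(ψⁿ x)` converge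
to one and the same point `x*`, and `Fix(ψ) ⊆ {x*}`. -/
theorem stmt_13 {X : Type*} [MetricSpace X] [CompleteSpace X] [Nonempty X]
    (m : ℕ) (hm : 3 ≤ m)
    (ψ : X → X) (α : ℝ) (hα0 : 0 ≤ α) (hα : α < 1 / 2)
    (hcontr : ∀ x y : X, dist (ψ^[m] x) (ψ^[m] y) ≤ α * (dist x (ψ y) + dist y (ψ x))) :
    ∃ xs : X, (∀ x : X, Filter.Tendsto (fun n => ψ^[n] x) Filter.atTop (nhds xs)) ∧
      ∀ y : X, ψ y = y → y = xs := by
  have key : ∀ x : X, ∃ l, Filter.Tendsto (fun n => ψ^[n] x) Filter.atTop (nhds l) := by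
    intro x
    set c : ℕ → ℝ := fun n => dist (ψ^[n] x) (ψ^[n+1] x) with hc
    have hc0 : ∀ n, 0 ≤ c n := fun n => dist_nonneg
    have hrec : ∀ n, c (m + n) ≤ α * (c n + c (n+1)) := by
      intro n
      have h := hcontr (ψ^[n] x) (ψ^[n+1] x)
      rw [← Function.iterate_add_apply, ← Function.iterate_add_apply,
        ← Function.iterate_succ_apply' ψ (n+1) x, ← Function.iterate_succ_apply' ψ n x,
        dist_self, add_zero] at h
      exact h.trans (mul_le_mul_of_nonneg_left (dist_triangle _ _ _) hα0)
    have hmono : Monotone (fun N => ∑ i ∈ Finset.range N, c i) := by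
      apply monotone_nat_of_le_succ
      intro n
      simp only [Finset.sum_range_succ]
      linarith [hc0 n]
    have hbd : ∀ N, ∑ i ∈ Finset.range N, c i ≤ (∑ i ∈ Finset.range m, c i) / (1 - 2 * α) := by
      intro N
      have h1 := Finset.sum_range_add c m N
      have h2 : ∑ i ∈ Finset.range N, c (m + i) ≤
          α * (∑ i ∈ Finset.range N, c i + ∑ i ∈ Finset.range N, c (i+1)) := by
        rw [← Finset.sum_add_distrib, Finset.mul_sum]
        exact Finset.sum_le_sum fun i _ => hrec i
      have h3 := Finset.sum_range_succ' c N
      have h4 : ∑ i ∈ Finset.range N, c i ≤ ∑ i ∈ Finset.range (m+N), c i := hmono (by omega)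
      have h5 : ∑ i ∈ Finset.range (N+1), c i ≤ ∑ i ∈ Finset.range (m+N), c i :=
        hmono (by omega)
      have h6 : α * (∑ i ∈ Finset.range N, c i + ∑ i ∈ Finset.range N, c (i+1)) ≤
          α * (∑ i ∈ Finset.range (m+N), c i + ∑ i ∈ Finset.range (m+N), c i) :=
        mul_le_mul_of_nonneg_left (by linarith [hc0 0]) hα0
      refine h4.trans ?_
      rw [le_div_iff₀ (by linarith)]
      linarith
    exact cauchySeq_tendsto_of_complete
      (cauchySeq_of_summable_dist (summable_of_sum_range_le hc0 hbd))
  choose l hl using key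
  have huniq : ∀ x y, l x = l y := by
    intro x y
    have t1 : ∀ (z : X) (k : ℕ), Filter.Tendsto (fun n => ψ^[n+k] z) Filter.atTop (nhds (l z)) :=
      fun z k => (Filter.tendsto_add_atTop_iff_nat k).2 (hl z)
    have A := (t1 x m).dist (t1 y m)
    have B := (((hl x).dist (t1 y 1)).add ((hl y).dist (t1 x 1))).const_mul α
    have h := le_of_tendsto_of_tendsto' A B (fun n => by
      have h := hcontr (ψ^[n] x) (ψ^[n] y)
      rw [← Function.iterate_add_apply, ← Function.iterate_add_apply,
        ← Function.iterate_succ_apply' ψ n x, ← Function.iterate_succ_apply' ψ n y,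
        add_comm m n] at h
      exact h)
    rw [dist_comm (l y) (l x)] at h
    have h0 : 0 ≤ dist (l x) (l y) := dist_nonneg
    exact dist_le_zero.1 (by nlinarith)
  obtain ⟨x0⟩ := ‹Nonempty X›
  refine ⟨l x0, fun x => huniq x x0 ▸ hl x, fun y hy => ?_⟩
  have h := hl y
  simp only [Function.iterate_fixed hy] at h
  rw [← huniq y x0]
  exact tendsto_nhds_unique tendsto_const_nhds h
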